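/- (Finite Hoeffding-type lemma.) Let q : Fin N → ℝ be a probability vector (q j ≥ 0, ∑_j q j = 1) and let x : Fin N → ℝ take values in a bounded interval [a, a + R] with R ≥ 0. Then log(∑_j q j · exp(x j)) ≤ ∑_j q j · x j + R² / 8. -/

import Mathlib

open MeasureTheory ProbabilityTheory

section Cgf

variable {Ω : Type*} [MeasurableSpace Ω] {μ : Measure Ω} {X : Ω → ℝ}

theorem cgf_sub_const [NeZero μ] {t : ℝ}
    (hX : Integrable (fun ω ↦ Real.exp (t * X ω)) μ) (c : ℝ) :
    cgf (fun ω ↦ X ω - c) μ t = cgf X μ t - t * c := by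
  have hmgf : mgf X μ t ≠ 0 := (mgf_pos' (NeZero.ne μ) hX).ne'
  simp only [cgf, sub_eq_add_neg, mgf_add_const, Real.log_mul hmgf (Real.exp_ne_zero _),
    Real.log_exp, mul_neg]

theorem stmt_2_general [IsProbabilityMeasure μ] {a b : ℝ} (hX : AEMeasurable X μ)
    (hab : ∀ᵐ ω ∂μ, X ω ∈ Set.Icc a b) (t : ℝ) :
    cgf X μ t ≤ t * μ[X] + (b - a) ^ 2 * t ^ 2 / 8 := by
  have hoeffding : cgf (fun ω ↦ X ω - μ[X]) μ t ≤ (|b - a| / 2) ^ 2 * t ^ 2 / 2 := by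
    simpa using (hasSubgaussianMGF_of_mem_Icc hX hab).cgf_le t
  rw [cgf_sub_const (integrable_exp_mul_of_mem_Icc hX hab), div_pow, sq_abs] at hoeffding
  linarith

end Cgf

theorem exists_pmf_toReal_eq_of_mem_stdSimplex {ι : Type*} [Fintype ι] {q : ι → ℝ}
    (hq : q ∈ stdSimplex ℝ ι) : ∃ p : PMF ι, ∀ i, (p i).toReal = q i := by
  have hsum : ∑ i, ENNReal.ofReal (q i) = 1 := by
    rw [← ENNReal.ofReal_sum_of_nonneg fun i _ ↦ hq.1 i, hq.2, ENNReal.ofReal_one]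
  exact ⟨PMF.ofFintype _ hsum, fun i ↦ ENNReal.toReal_ofReal (hq.1 i)⟩

/-- Finite Hoeffding-type lemma: for a probability vector `q` on `Fin N` and values
`x j` in a bounded interval `[a, a + R]`,
`log (∑ j, q j * exp (x j)) ≤ ∑ j, q j * x j + R² / 8`. -/
theorem stmt_2 (N : ℕ) (q : Fin N → ℝ) (hq0 : ∀ j, 0 ≤ q j)
    (hq1 : ∑ j : Fin N, q j = 1)
    (x : Fin N → ℝ) (a R : ℝ) (hR : 0 ≤ R)
    (hx : ∀ j, x j ∈ Set.Icc a (a + R)) :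
    Real.log (∑ j : Fin N, q j * Real.exp (x j)) ≤
      (∑ j : Fin N, q j * x j) + R ^ 2 / 8 := by
  obtain ⟨p, hp⟩ := exists_pmf_toReal_eq_of_mem_stdSimplex ⟨hq0, hq1⟩
  simpa [cgf, mgf, PMF.integral_eq_sum, hp] using
    stmt_2_general (μ := p.toMeasure) (measurable_of_finite x).aemeasurable (.of_forall hx) 1
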